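/- Let V be a finite-dimensional real inner product space with inner product ⟨·,·⟩ and norm ‖·‖, and let a : V × V → ℝ be a symmetric bilinear form satisfying a(v,v) ≥ α ‖v‖² for all v ∈ V, for some α > 0. Let 0 = t₀ < t₁ < ⋯ < t_N be real numbers with τₘ := tₘ − t_{m−1}, let e₀, …, e_N ∈ V, and let δ₁, …, δ_N ≥ 0. Set dₘ := τₘ⁻¹ • (eₘ − e_{m−1}) and ēₘ := (e_{m−1} + eₘ)/2. Assume that for every m = 1,…,N and every v ∈ V: ⟨dₘ, v⟩ + a(ēₘ, v) ≤ δₘ ‖v‖. Then for every n = 1,…,N: ‖eₙ‖² + Σ_{m=1}^{n} τₘ a(ēₘ, ēₘ) ≤ ‖e₀‖² + (1/α) Σ_{m=1}^{n} τₘ δₘ². -/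

import Mathlib

/-!
Testing the residual inequality at step `m` with `ebar m` turns the time-derivative term into a
difference of squares, `τ ⟪d, ebar⟫ = (‖e m‖ ^ 2 - ‖e (m - 1)‖ ^ 2) / 2`, while Young's inequality
`2 δ ‖ebar‖ ≤ δ ^ 2 / α + α ‖ebar‖ ^ 2` and coercivity let half of the energy term absorb the
right-hand side. This is the one-step bound `energy_step`; summing it telescopes.
-/

open scoped RealInnerProductSpace

/-- Energy balance over a single step of length `τ` from `x` to `y`, where `A` stands for the
energy of the midpoint. Only the residual inequality tested with the midpoint is needed. -/
theorem energy_step {V : Type*} [NormedAddCommGroup V] [InnerProductSpace ℝ V]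
    {α τ δ A : ℝ} (hα : 0 < α) (hτ : 0 < τ) (x y : V)
    (hcoer : α * ‖(2 : ℝ)⁻¹ • (x + y)‖ ^ 2 ≤ A)
    (hres : ⟪τ⁻¹ • (y - x), (2 : ℝ)⁻¹ • (x + y)⟫ + A ≤ δ * ‖(2 : ℝ)⁻¹ • (x + y)‖) :
    ‖y‖ ^ 2 + τ * A ≤ ‖x‖ ^ 2 + (1 / α) * (τ * δ ^ 2) := by
  have hinner : ⟪τ⁻¹ • (y - x), (2 : ℝ)⁻¹ • (x + y)⟫
      = τ⁻¹ * ((‖y‖ ^ 2 - ‖x‖ ^ 2) / 2) := by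
    rw [real_inner_smul_left, real_inner_smul_right, inner_sub_left, inner_add_right,
      inner_add_right, real_inner_self_eq_norm_sq, real_inner_self_eq_norm_sq,
      real_inner_comm x y]
    ring
  rw [hinner] at hres
  generalize ‖(2 : ℝ)⁻¹ • (x + y)‖ = r at hcoer hres
  have hyoung : 2 * (δ * r) ≤ 1 / α * δ ^ 2 + α * r ^ 2 := by
    have h : 1 / α * δ ^ 2 + α * r ^ 2 - 2 * (δ * r) = (δ - α * r) ^ 2 / α := by
      field_simp
      ring
    have h' : 0 ≤ (δ - α * r) ^ 2 / α := by positivity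
    linarith
  have hstep : τ⁻¹ * (‖y‖ ^ 2 - ‖x‖ ^ 2) + A ≤ 1 / α * δ ^ 2 := by linarith
  have hmul := mul_le_mul_of_nonneg_left hstep hτ.le
  rw [mul_add, mul_inv_cancel_left₀ hτ.ne'] at hmul
  linarith

/-- Abstract energy argument: testing the residual inequality with the midpoint value yields
control of the norm at the nodes and of the energy norm at the midpoints. -/
theorem discrete_energy_estimate_midpoint
    {V : Type*} [NormedAddCommGroup V] [InnerProductSpace ℝ V] [FiniteDimensional ℝ V]
    (a : V →ₗ[ℝ] V →ₗ[ℝ] ℝ) (hsymm : ∀ v w : V, a v w = a w v)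
    (α : ℝ) (hα : 0 < α) (hcoer : ∀ v : V, α * ‖v‖ ^ 2 ≤ a v v)
    (N : ℕ) (hN : 1 ≤ N) (t : ℕ → ℝ) (ht0 : t 0 = 0)
    (hmono : ∀ i, i < N → t i < t (i + 1))
    (τ : ℕ → ℝ) (hτ : ∀ m : ℕ, τ m = t m - t (m - 1))
    (e : ℕ → V) (δ : ℕ → ℝ) (hδ : ∀ m : ℕ, 1 ≤ m → m ≤ N → 0 ≤ δ m)
    (d ebar : ℕ → V)
    (hd : ∀ m : ℕ, d m = (τ m)⁻¹ • (e m - e (m - 1)))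
    (hebar : ∀ m : ℕ, ebar m = (2 : ℝ)⁻¹ • (e (m - 1) + e m))
    (hres : ∀ m : ℕ, 1 ≤ m → m ≤ N → ∀ v : V, ⟪d m, v⟫ + a (ebar m) v ≤ δ m * ‖v‖) :
    ∀ n : ℕ, 1 ≤ n → n ≤ N →
      ‖e n‖ ^ 2 + (∑ m ∈ Finset.Icc 1 n, τ m * a (ebar m) (ebar m))
        ≤ ‖e 0‖ ^ 2 + (1 / α) * ∑ m ∈ Finset.Icc 1 n, τ m * δ m ^ 2 := by
  rintro n - hn
  -- The bound also holds trivially for `n = 0`, which starts the induction.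
  induction n with
  | zero => simp
  | succ k ih =>
    have hstep := energy_step (A := a (ebar (k + 1)) (ebar (k + 1))) (δ := δ (k + 1)) hα
      (sub_pos.2 (hmono k hn)) (e k) (e (k + 1))
    have hres' := hres (k + 1) (by omega) hn (ebar (k + 1))
    have hcoer' := hcoer (ebar (k + 1))
    have hb := hebar (k + 1)
    have hτ' := hτ (k + 1)
    have hd' := hd (k + 1)
    rw [Nat.add_sub_cancel] at hb hτ' hd'
    rw [← hb, ← hτ', ← hd'] at hstep
    have hnew := hstep hcoer' hres'
    have hold := ih (by omega)
    rw [Finset.sum_Icc_succ_top (by omega), Finset.sum_Icc_succ_top (by omega), mul_add]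
    linarith
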